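/- Let γ=(B,M,S,A,Â) be a market with middlemen and γ*=(B,S,A*) the associated two-sided assignment market. If σ is an optimal matching for γ* (i.e. its value attains w_{γ*}(B∪S)), then the induced N-matching σ^△ is an optimal matching for γ (i.e. its value attains v_γ(N)). -/

import Mathlib

/-!
Matching markets with middlemen (Atay, Bahel, Solymosi).

Players are of three sorts: buyers `B`, middlemen `M`, sellers `S`
(three disjoint nonempty finite types); the player set is `Player B M S = B ⊕ M ⊕ S`.
An (functional representation of a) `T`-matching assigns to each buyer either nothing
(the buyer is single), a seller (direct trade), or a middleman together with a seller
(mediated trade); distinct buyers get distinct sellers, and all agents involved lie in `T`.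
A middleman may mediate several trades.
-/

open scoped Classical

noncomputable section

/-- The set of players of a market with middlemen: buyers `B`, middlemen `M`, sellers `S`. -/
abbrev Player (B M S : Type*) := B ⊕ M ⊕ S

/-- Functional representation of a matching in the market with middlemen: each buyer is
unmatched (`none`), matched directly to a seller (`some (none, k)`), or matched to a seller
through a middleman (`some (some j, k)`). -/
abbrev MMatch (B M S : Type*) := B → Option (Option M × S)

namespace Middlemen

variable {B M S : Type*}

/-- A buyer as a player. -/
def buyer (i : B) : Player B M S := Sum.inl i

/-- A middleman as a player. -/
def mid (j : M) : Player B M S := Sum.inr (Sum.inl j)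

/-- A seller as a player. -/
def seller (k : S) : Player B M S := Sum.inr (Sum.inr k)

/-- `f` is a `T`-matching in the market with middlemen: every basic coalition used by `f`
is contained in `T` and no seller is matched to two distinct buyers.  (Buyers, middlemen
and sellers of `T` not appearing in any trade are singletons of the matching.) -/
def IsMatching (T : Finset (Player B M S)) (f : MMatch B M S) : Prop :=
  (∀ i o k, f i = some (o, k) →
      buyer i ∈ T ∧ seller k ∈ T ∧ ∀ j, o = some j → mid j ∈ T) ∧
  (∀ i i' o o' k, f i = some (o, k) → f i' = some (o', k) → i = i')

variable [Fintype B] [Fintype M] [Fintype S]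

/-- The value `Σ_{(i,k)∈μ} a_{ik} + Σ_{(i,j,k)∈μ} â_{ijk}` of a matching in the market
with middlemen with direct-trade surplus matrix `A` and mediated-trade surpluses `Ah`. -/
def mval (A : B → S → ℝ) (Ah : B → M → S → ℝ) (f : MMatch B M S) : ℝ :=
  ∑ i, (match f i with
    | none => 0
    | some (none, k) => A i k
    | some (some j, k) => Ah i j k)

/-- The TU game `v_γ` associated with the market with middlemen `γ = (B,M,S,A,Ah)`:
the worth of a coalition `T` is the maximal value of a `T`-matching. -/
def vGame (A : B → S → ℝ) (Ah : B → M → S → ℝ) (T : Finset (Player B M S)) : ℝ :=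
  sSup { r | ∃ f : MMatch B M S, IsMatching T f ∧ r = mval A Ah f }

/-- `g` is a matching of the coalition `R` in a two-sided assignment market. -/
def IsMatching2 (R : Finset (B ⊕ S)) (g : B → Option S) : Prop :=
  (∀ i k, g i = some k → Sum.inl i ∈ R ∧ Sum.inr k ∈ R) ∧
  (∀ i i' k, g i = some k → g i' = some k → i = i')

/-- The value of a two-sided matching with valuation matrix `As`. -/
def m2val (As : B → S → ℝ) (g : B → Option S) : ℝ :=
  ∑ i, (match g i with
    | none => 0
    | some k => As i k)

/-- The assignment game `w_{γ*}` of the two-sided assignment market `(B,S,As)`. -/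
def wGame (As : B → S → ℝ) (R : Finset (B ⊕ S)) : ℝ :=
  sSup { r | ∃ g : B → Option S, IsMatching2 R g ∧ r = m2val As g }

/-- The matrix `A*` of the associated two-sided assignment market:
`a*_{ik} = max_{j ∈ M} â_{ijk}`. -/
def Astar [Nonempty M] (Ah : B → M → S → ℝ) (i : B) (k : S) : ℝ :=
  Finset.univ.sup' Finset.univ_nonempty fun j => Ah i j k

/-- The two-sided matching `μ*` induced by a matching `μ` of the market with middlemen:
keep all matched buyer–seller pairs (dropping the middlemen). -/
def star (f : MMatch B M S) : B → Option S := fun i => (f i).map Prod.snd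

/-- `m(i,k)`: the lowest-indexed middleman `j` maximizing `â_{ijk}`. -/
def bestMid [Nonempty M] [LinearOrder M] (Ah : B → M → S → ℝ) (i : B) (k : S) : M :=
  (Finset.univ.filter fun j => ∀ j' : M, Ah i j' k ≤ Ah i j k).min' (by
    obtain ⟨j, -, hj⟩ := Finset.exists_max_image (Finset.univ : Finset M)
      (fun j => Ah i j k) Finset.univ_nonempty
    exact ⟨j, Finset.mem_filter.mpr ⟨Finset.mem_univ _, fun j' => hj j' (Finset.mem_univ _)⟩⟩)

/-- The matching `σ^△` of the market with middlemen induced by a two-sided matching `σ`: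
each matched pair `{i,k}` of `σ` trades through the best middleman `m(i,k)`
(and every other middleman is a singleton). -/
def triangle [Nonempty M] [LinearOrder M] (Ah : B → M → S → ℝ) (g : B → Option S) :
    MMatch B M S :=
  fun i => (g i).map fun k => (some (bestMid Ah i k), k)

/-- The core of a TU game on the finite player set `P`. -/
def core {P : Type*} [Fintype P] (v : Finset P → ℝ) : Set (P → ℝ) :=
  { x | ∑ t, x t = v Finset.univ ∧ ∀ T : Finset P, v T ≤ ∑ t ∈ T, x t }

/-- Augment a payoff vector of the two-sided market with zero payoffs to all middlemen. -/
def aug (xz : B ⊕ S → ℝ) : Player B M S → ℝ := fun t =>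
  match t with
  | Sum.inl i => xz (Sum.inl i)
  | Sum.inr (Sum.inl _) => 0
  | Sum.inr (Sum.inr k) => xz (Sum.inr k)

/-- Restrict a payoff vector of the market with middlemen to the buyers and sellers. -/
def restrictBS (X : Player B M S → ℝ) : B ⊕ S → ℝ := fun t =>
  match t with
  | Sum.inl i => X (buyer i)
  | Sum.inr k => X (seller k)

/-- The set `T ∩ (B ∪ S)` of buyers and sellers of a coalition `T`. -/
def bsPart (T : Finset (Player B M S)) : Finset (B ⊕ S) :=
  Finset.univ.filter fun t =>
    match t with
    | Sum.inl i => buyer i ∈ T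
    | Sum.inr k => (seller k : Player B M S) ∈ T

/-- The coalition `R ∪ M` consisting of the buyers and sellers of `R` together with
all middlemen. -/
def withAllMid (R : Finset (B ⊕ S)) : Finset (Player B M S) :=
  Finset.univ.filter fun t =>
    match t with
    | Sum.inl i => Sum.inl i ∈ R
    | Sum.inr (Sum.inl _) => True
    | Sum.inr (Sum.inr k) => Sum.inr k ∈ R

end Middlemen

namespace Middlemen

/-!
Dropping the middlemen from a matching `μ` of `γ` gives a matching `μ*` of `γ*` of at least the
same value, since no trade between `i` and `k`, direct or mediated, is worth more than `a*_{ik}`.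
In `σ^△` every trade is worth exactly `a*_{ik}`, so `σ^△` and `σ` have the same value. Hence
`μ ≤ μ* ≤ σ = σ^△` in value. Any coalition containing all middlemen can replace `N`.
-/

section

variable {B M S : Type*}

section Surplus

variable [Fintype M] [Nonempty M] (Ah : B → M → S → ℝ)

theorem le_Astar (i : B) (j : M) (k : S) : Ah i j k ≤ Astar Ah i k :=
  Finset.le_sup' (fun j => Ah i j k) (Finset.mem_univ j)

theorem le_bestMid [LinearOrder M] (i : B) (j : M) (k : S) :
    Ah i j k ≤ Ah i (bestMid Ah i k) k :=
  (Finset.mem_filter.mp (Finset.min'_mem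
    (Finset.univ.filter fun j => ∀ j' : M, Ah i j' k ≤ Ah i j k) _)).2 j

theorem apply_bestMid_eq_Astar [LinearOrder M] (i : B) (k : S) :
    Ah i (bestMid Ah i k) k = Astar Ah i k :=
  le_antisymm (le_Astar Ah i _ k) (Finset.sup'_le _ _ fun j _ => le_bestMid Ah i j k)

end Surplus

theorem star_eq_some_iff {f : MMatch B M S} {i : B} {k : S} :
    star f i = some k ↔ ∃ o, f i = some (o, k) := by
  simp [star, Option.map_eq_some_iff]

theorem triangle_eq_some_iff [Fintype M] [Nonempty M] [LinearOrder M] {Ah : B → M → S → ℝ}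
    {g : B → Option S} {i : B} {o : Option M} {k : S} :
    triangle Ah g i = some (o, k) ↔ g i = some k ∧ o = some (bestMid Ah i k) := by
  simp only [triangle, Option.map_eq_some_iff, Prod.mk.injEq]
  grind

section Matching

variable [Fintype B] [Fintype S] {T : Finset (Player B M S)}

theorem inl_mem_bsPart {i : B} : Sum.inl i ∈ bsPart T ↔ buyer i ∈ T := by
  simp [bsPart]

theorem inr_mem_bsPart {k : S} : Sum.inr k ∈ bsPart T ↔ seller k ∈ T := by
  simp [bsPart]

theorem bsPart_univ [Fintype M] : bsPart (Finset.univ : Finset (Player B M S)) = Finset.univ := by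
  ext (i | k)
  · simp [inl_mem_bsPart]
  · simp [inr_mem_bsPart]

theorem IsMatching.isMatching2_star {f : MMatch B M S} (hf : IsMatching T f) :
    IsMatching2 (bsPart T) (star f) := by
  constructor
  · intro i k hik
    obtain ⟨o, hik⟩ := star_eq_some_iff.mp hik
    obtain ⟨hi, hk, -⟩ := hf.1 i o k hik
    exact ⟨inl_mem_bsPart.mpr hi, inr_mem_bsPart.mpr hk⟩
  · intro i i' k hik hik'
    obtain ⟨o, hik⟩ := star_eq_some_iff.mp hik
    obtain ⟨o', hik'⟩ := star_eq_some_iff.mp hik'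
    exact hf.2 i i' o o' k hik hik'

theorem IsMatching2.isMatching_triangle [Fintype M] [Nonempty M] [LinearOrder M]
    (Ah : B → M → S → ℝ) {g : B → Option S} (hT : ∀ j, mid j ∈ T)
    (hg : IsMatching2 (bsPart T) g) : IsMatching T (triangle Ah g) := by
  constructor
  · intro i o k hik
    obtain ⟨hi, hk⟩ := hg.1 i k (triangle_eq_some_iff.mp hik).1
    exact ⟨inl_mem_bsPart.mp hi, inr_mem_bsPart.mp hk, fun j _ => hT j⟩
  · intro i i' o o' k hik hik'
    exact hg.2 i i' k (triangle_eq_some_iff.mp hik).1 (triangle_eq_some_iff.mp hik').1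

end Matching

section Value

variable [Fintype B]

theorem mval_triangle [Fintype M] [Nonempty M] [LinearOrder M] (A : B → S → ℝ)
    (Ah : B → M → S → ℝ) (g : B → Option S) :
    mval A Ah (triangle Ah g) = m2val (Astar Ah) g := by
  refine Finset.sum_congr rfl fun i _ => ?_
  cases hgi : g i with
  | none => simp [triangle, hgi]
  | some k => simp [triangle, hgi, apply_bestMid_eq_Astar]

theorem mval_le_m2val_star [Fintype M] [Nonempty M] {A : B → S → ℝ} {Ah : B → M → S → ℝ}
    (hA : ∀ i k, A i k ≤ Astar Ah i k) (f : MMatch B M S) :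
    mval A Ah f ≤ m2val (Astar Ah) (star f) := by
  refine Finset.sum_le_sum fun i _ => ?_
  rcases hfi : f i with _ | ⟨_ | j, k⟩
  · simp [star, hfi]
  · simpa [star, hfi] using hA i k
  · simpa [star, hfi] using le_Astar Ah i j k

theorem m2val_le_wGame [Finite S] (As : B → S → ℝ) {R : Finset (B ⊕ S)} {g : B → Option S}
    (hg : IsMatching2 R g) : m2val As g ≤ wGame As R := by
  refine le_csSup ((Set.finite_range (m2val As)).subset ?_).bddAbove ⟨g, hg, rfl⟩
  rintro _ ⟨g', -, rfl⟩
  exact Set.mem_range_self g'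

theorem mval_eq_vGame_of_forall_le {A : B → S → ℝ} {Ah : B → M → S → ℝ}
    {T : Finset (Player B M S)} {f : MMatch B M S} (hf : IsMatching T f)
    (hmax : ∀ f', IsMatching T f' → mval A Ah f' ≤ mval A Ah f) :
    mval A Ah f = vGame A Ah T := by
  symm
  apply IsGreatest.csSup_eq
  refine ⟨⟨f, hf, rfl⟩, ?_⟩
  rintro _ ⟨f', hf', rfl⟩
  exact hmax f' hf'

end Value

theorem triangle_optimal_general [Fintype B] [Fintype M] [Fintype S] [Nonempty M] [LinearOrder M]
    {A : B → S → ℝ} {Ah : B → M → S → ℝ} (hA : ∀ i k, A i k ≤ Astar Ah i k)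
    {T : Finset (Player B M S)} (hT : ∀ j, mid j ∈ T)
    {g : B → Option S} (hg : IsMatching2 (bsPart T) g)
    (hopt : m2val (Astar Ah) g = wGame (Astar Ah) (bsPart T)) :
    IsMatching T (triangle Ah g) ∧ mval A Ah (triangle Ah g) = vGame A Ah T := by
  have htriangle : IsMatching T (triangle Ah g) := hg.isMatching_triangle Ah hT
  refine ⟨htriangle, mval_eq_vGame_of_forall_le htriangle fun f hf => ?_⟩
  calc mval A Ah f ≤ m2val (Astar Ah) (star f) := mval_le_m2val_star hA f
    _ ≤ wGame (Astar Ah) (bsPart T) := m2val_le_wGame _ hf.isMatching2_star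
    _ = m2val (Astar Ah) g := hopt.symm
    _ = mval A Ah (triangle Ah g) := (mval_triangle A Ah g).symm

end

/-- if `σ` is an optimal matching of the associated two-sided assignment
market `γ*`, then `σ^△` is an optimal matching of the market with middlemen `γ`. -/
theorem triangle_optimal
    {B M S : Type*} [Fintype B] [Fintype M] [Fintype S]
    [Nonempty B] [Nonempty M] [Nonempty S] [LinearOrder M]
    (A : B → S → ℝ) (Ah : B → M → S → ℝ)
    (hA : ∀ i k, 0 ≤ A i k) (hAh : ∀ i j k, A i k ≤ Ah i j k)
    (g : B → Option S) (hg : IsMatching2 Finset.univ g)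
    (hopt : m2val (Astar Ah) g = wGame (Astar Ah) Finset.univ) :
    IsMatching Finset.univ (triangle Ah g) ∧
      mval A Ah (triangle Ah g) = vGame A Ah Finset.univ := by
  rw [← bsPart_univ (M := M)] at hg hopt
  exact triangle_optimal_general
    (fun i k => (hAh i (Classical.arbitrary M) k).trans (le_Astar Ah i _ k))
    (fun j => Finset.mem_univ (mid j)) hg hopt

end Middlemen
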